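/- Theorem 5.1(i): Suppose the kernel k is homogeneous of degree β−1 for some β∈(0,2) with k(1,·)∈L^{1+ε}((0,1)) for some ε>0, and that x↦Φ̂(−x) is completely monotone on (0,∞). Let γ∈(β,2] and δ∈[γ,2]. Let A be a nonnegative random variable with E[e^{−λA}]=Φ̂(−λ^{γ/δ}) for all λ>0 (such A exists since x↦Φ̂(−x^{γ/δ}) is completely monotone), and let (Y_t)_{t≥0} be a jointly measurable real-valued stochastic process, independent of A, with E[e^{ipY_t}]=e^{−t^{δβ/γ}|p|^δ} for all t≥0 and p∈ℝ. Then E[e^{ip·A^{1/δ}Y_t}] = Φ̂(−|p|^γ t^β) for all p∈ℝ and t≥0, and the process (A^{1/δ}Y_t)_{t≥0} provides a stochastic solution to the one-dimensional evolution equation u(t,x)=u₀(x)+∫_0^t k(t,s) Δ^{γ/2}u(s,x) ds, where Δ^{γ/2} is the Fourier multiplier operator with symbol −|p|^γ. -/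

import Mathlib

open MeasureTheory Filter

noncomputable section

noncomputable def FT1 (f : ℝ → ℂ) (p : ℝ) : ℂ :=
  (((2 * Real.pi) ^ (-(1 : ℝ) / 2) : ℝ) : ℂ) *
    ∫ x : ℝ, Complex.exp (-Complex.I * ((p * x : ℝ) : ℂ)) * f x

noncomputable def FTinv1 (f : ℝ → ℂ) (x : ℝ) : ℂ :=
  (((2 * Real.pi) ^ (-(1 : ℝ) / 2) : ℝ) : ℂ) *
    ∫ p : ℝ, Complex.exp (Complex.I * ((p * x : ℝ) : ℂ)) * f p

noncomputable def Lop1 (ψ : ℝ → ℂ) (v : ℝ → ℂ) : ℝ → ℂ :=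
  FTinv1 fun p => -ψ p * FT1 v p

noncomputable def charFn1 {Ω : Type*} [MeasurableSpace Ω] (P : Measure Ω)
    (X : Ω → ℝ) (p : ℝ) : ℂ :=
  ∫ ω, Complex.exp (Complex.I * ((p * X ω : ℝ) : ℂ)) ∂P

def ProvidesSol1 {Ω : Type*} [MeasurableSpace Ω] (P : Measure Ω)
    (X : ℝ → Ω → ℝ) (k : ℝ → ℝ → ℝ) (ψ : ℝ → ℂ) : Prop :=
  ∀ u₀ : SchwartzMap ℝ ℂ,
    (∀ s : ℝ, 0 ≤ s →
      MeasureTheory.Integrable (fun p => ψ p * FT1 (fun y => ∫ ω, u₀ (y + X s ω) ∂P) p)) ∧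
    (∀ t : ℝ, 0 < t → ∀ x : ℝ,
      (∫ ω, u₀ (x + X t ω) ∂P) =
        u₀ x + ∫ s in Set.Ioc (0:ℝ) t,
          (k t s : ℂ) * Lop1 ψ (fun y => ∫ ω, u₀ (y + X s ω) ∂P) x) ∧
    (∀ x : ℝ,
      Filter.Tendsto (fun t : ℝ => ∫ ω, u₀ (x + X t ω) ∂P)
        (nhdsWithin 0 (Set.Ioi 0)) (nhds (u₀ x)))

noncomputable def coeff (k : ℝ → ℝ → ℝ) : ℕ → ℝ → ℝ
  | 0, _ => 1
  | n + 1, t => if 0 < t then ∫ s in Set.Ioc (0:ℝ) t, k t s * coeff k n s else 0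

noncomputable def Phi (k : ℝ → ℝ → ℝ) (t : ℝ) (l : ℂ) : ℂ :=
  ∑' n : ℕ, (coeff k n t : ℂ) * l ^ n

noncomputable def PhiR (k : ℝ → ℝ → ℝ) (t : ℝ) (x : ℝ) : ℝ :=
  ∑' n : ℕ, coeff k n t * x ^ n

noncomputable def chat (k : ℝ → ℝ → ℝ) (β : ℝ) : ℕ → ℝ
  | 0 => 1
  | n + 1 => chat k β n * ∫ s in Set.Ioc (0:ℝ) 1, k 1 s * s ^ (β * (n : ℝ))

noncomputable def PhiHatC (k : ℝ → ℝ → ℝ) (β : ℝ) (z : ℂ) : ℂ :=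
  ∑' n : ℕ, (chat k β n : ℂ) * z ^ n

noncomputable def PhiHatR (k : ℝ → ℝ → ℝ) (β : ℝ) (x : ℝ) : ℝ :=
  ∑' n : ℕ, chat k β n * x ^ n

def CMon (f : ℝ → ℝ) : Prop :=
  ContDiffOn ℝ (⊤ : ℕ∞) f (Set.Ioi 0) ∧
  ∀ (n : ℕ), ∀ x ∈ Set.Ioi (0:ℝ),
    0 ≤ (-1 : ℝ) ^ n * iteratedDerivWithin n f (Set.Ioi 0) x

lemma aux_kint (k : ℝ → ℝ → ℝ) (hkm : Measurable (Function.uncurry k)) (ε : ℝ) (hε : 0 < ε)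
    (hkL : MeasureTheory.IntegrableOn (fun s => |k 1 s| ^ (1 + ε)) (Set.Ioo 0 1)) :
    IntegrableOn (k 1) (Set.Ioc 0 1) := by
  rw [integrableOn_Ioc_iff_integrableOn_Ioo]
  have h1 : IntegrableOn (fun s => 1 + |k 1 s| ^ (1 + ε)) (Set.Ioo (0:ℝ) 1) := by
    refine Integrable.add ?_ hkL
    exact integrableOn_const (by simp)
  refine Integrable.mono' h1 (hkm.of_uncurry_left).aestronglyMeasurable ?_
  refine Filter.Eventually.of_forall fun s => ?_
  rw [Real.norm_eq_abs]
  rcases le_total (|k 1 s|) 1 with h | h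
  · have : 0 ≤ |k 1 s| ^ (1 + ε) := by positivity
    linarith
  · have := Real.self_le_rpow_of_one_le h (by linarith : 1 ≤ 1 + ε)
    linarith

lemma aux_pow_le {s a : ℝ} (hs : s ∈ Set.Ioc (0:ℝ) 1) (ha : 0 ≤ a) : |s ^ a| ≤ 1 := by
  rw [abs_of_nonneg (Real.rpow_nonneg hs.1.le _)]
  exact Real.rpow_le_one hs.1.le hs.2 ha

lemma aux_mom_int (k : ℝ → ℝ → ℝ) (hk : IntegrableOn (k 1) (Set.Ioc 0 1)) {a : ℝ} (ha : 0 ≤ a) :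
    IntegrableOn (fun s => k 1 s * s ^ a) (Set.Ioc 0 1) := by
  refine Integrable.mono' hk.norm (hk.aestronglyMeasurable.mul
    (by fun_prop : Measurable fun s : ℝ => s ^ a).aestronglyMeasurable) ?_
  refine (ae_restrict_iff' measurableSet_Ioc).2 (Filter.Eventually.of_forall fun s hs => ?_)
  rw [norm_mul]
  exact mul_le_of_le_one_right (norm_nonneg _) (aux_pow_le hs ha)

lemma aux_mom_tendsto (k : ℝ → ℝ → ℝ) (β : ℝ) (hβ0 : 0 < β)
    (hk : IntegrableOn (k 1) (Set.Ioc 0 1)) :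
    Tendsto (fun n : ℕ => ∫ s in Set.Ioc (0:ℝ) 1, k 1 s * s ^ (β * (n : ℝ))) atTop (nhds 0) := by
  have : Tendsto (fun n : ℕ => ∫ s in Set.Ioc (0:ℝ) 1, k 1 s * s ^ (β * (n : ℝ))) atTop
      (nhds (∫ s in Set.Ioc (0:ℝ) 1, (0:ℝ))) := by
    refine tendsto_integral_of_dominated_convergence (fun s => ‖k 1 s‖)
      (fun n => (aux_mom_int k hk (by positivity)).aestronglyMeasurable) hk.norm ?_ ?_
    · intro n
      refine (ae_restrict_iff' measurableSet_Ioc).2 (Filter.Eventually.of_forall fun s hs => ?_)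
      rw [norm_mul]
      exact mul_le_of_le_one_right (norm_nonneg _) (aux_pow_le hs (by positivity))
    · rw [← restrict_Ioo_eq_restrict_Ioc]
      refine (ae_restrict_iff' measurableSet_Ioo).2 (Filter.Eventually.of_forall fun s hs => ?_)
      have h1 : s ^ β < 1 := Real.rpow_lt_one hs.1.le hs.2 hβ0
      have h2 := tendsto_pow_atTop_nhds_zero_of_lt_one (Real.rpow_nonneg hs.1.le β) h1
      have h3 := h2.const_mul (k 1 s)
      simp only [mul_zero] at h3
      refine h3.congr fun n => ?_
      rw [Real.rpow_mul hs.1.le, Real.rpow_natCast]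
  simpa using this

lemma aux_summable (k : ℝ → ℝ → ℝ) (β : ℝ) (hβ0 : 0 < β)
    (hk : IntegrableOn (k 1) (Set.Ioc 0 1)) (y : ℝ) :
    Summable (fun n : ℕ => chat k β n * y ^ n) := by
  refine summable_of_ratio_norm_eventually_le (r := 1/2) (by norm_num) ?_
  have h := ((aux_mom_tendsto k β hβ0 hk).mul_const y).norm
  simp only [zero_mul, norm_zero] at h
  filter_upwards [h.eventually (Iio_mem_nhds (by norm_num : (0:ℝ) < 1/2))] with n hn
  simp only [chat]
  rw [pow_succ, show ∀ a b c d : ℝ, a * b * (c * d) = (b * d) * (a * c) by intros; ring, norm_mul]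
  exact mul_le_mul_of_nonneg_right (le_of_lt hn) (norm_nonneg _)

lemma aux_phi_zero (k : ℝ → ℝ → ℝ) (β : ℝ) : PhiHatR k β 0 = 1 := by
  unfold PhiHatR
  rw [tsum_eq_single 0]
  · simp [chat]
  · intro n hn
    simp [hn]

lemma aux_eq1 (k : ℝ → ℝ → ℝ) (β : ℝ) (hβ0 : 0 < β)
    (hk : IntegrableOn (k 1) (Set.Ioc 0 1)) (y : ℝ) :
    PhiHatR k β y = 1 + y * ∫ r in Set.Ioc (0:ℝ) 1, k 1 r * PhiHatR k β (y * r ^ β) := by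
  have hs := aux_summable k β hβ0 hk y
  have hI : ∀ n : ℕ, IntegrableOn (fun r => k 1 r * r ^ (β * (n:ℝ)) * (chat k β n * y ^ n))
      (Set.Ioc 0 1) := fun n => (aux_mom_int k hk (by positivity)).mul_const _
  have key := hasSum_integral_of_summable_integral_norm
    (μ := volume.restrict (Set.Ioc (0:ℝ) 1))
    (F := fun (n : ℕ) r => k 1 r * r ^ (β * (n:ℝ)) * (chat k β n * y ^ n)) hI (by
      refine Summable.of_nonneg_of_le (fun n => integral_nonneg fun r => norm_nonneg _) (fun n => ?_)
        (hs.norm.mul_left (∫ r in Set.Ioc (0:ℝ) 1, ‖k 1 r‖))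
      rw [← integral_mul_const]
      refine integral_mono_ae (hI n).norm (hk.norm.mul_const _) ?_
      refine (ae_restrict_iff' measurableSet_Ioc).2 (Filter.Eventually.of_forall fun s hs => ?_)
      simp only
      rw [norm_mul]
      refine mul_le_mul_of_nonneg_right ?_ (norm_nonneg _)
      rw [norm_mul]
      exact mul_le_of_le_one_right (norm_nonneg _) (aux_pow_le hs (by positivity)))
  have e1 : ∫ r in Set.Ioc (0:ℝ) 1, k 1 r * PhiHatR k β (y * r ^ β) =
      ∫ r in Set.Ioc (0:ℝ) 1, ∑' n : ℕ, k 1 r * r ^ (β * (n:ℝ)) * (chat k β n * y ^ n) := by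
    refine setIntegral_congr_fun measurableSet_Ioc fun r hr => ?_
    simp only [PhiHatR]
    rw [← tsum_mul_left]
    refine tsum_congr fun n => ?_
    rw [Real.rpow_mul hr.1.le, Real.rpow_natCast, mul_pow]
    ring
  rw [e1, ← key.tsum_eq, PhiHatR, hs.tsum_eq_zero_add, ← tsum_mul_left]
  congr 1
  · simp [chat]
  · refine tsum_congr fun n => ?_
    rw [integral_mul_const]
    simp only [chat]
    ring

lemma aux_k_eq (k : ℝ → ℝ → ℝ) (β : ℝ)
    (hhom : ∀ t : ℝ, 0 < t → ∀ s ∈ Set.Ioo (0:ℝ) 1, k t (t * s) = t ^ (β - 1) * k 1 s)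
    {t s : ℝ} (ht : 0 < t) (hs : s ∈ Set.Ioo 0 t) : k t s = t ^ (β - 1) * k 1 (s / t) := by
  rw [← hhom t ht (s / t) ⟨div_pos hs.1 ht, (div_lt_one ht).2 hs.2⟩]
  congr 1
  field_simp

lemma aux_kint_t (k : ℝ → ℝ → ℝ) (β : ℝ)
    (hhom : ∀ t : ℝ, 0 < t → ∀ s ∈ Set.Ioo (0:ℝ) 1, k t (t * s) = t ^ (β - 1) * k 1 s)
    (hk : IntegrableOn (k 1) (Set.Ioc 0 1)) {t : ℝ} (ht : 0 < t) :
    IntegrableOn (k t) (Set.Ioc 0 t) := by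
  have h1 : IntervalIntegrable (k 1) volume 0 1 := by
    rwa [intervalIntegrable_iff_integrableOn_Ioc_of_le zero_le_one]
  have h2 := (h1.comp_mul_left (c := t⁻¹)).const_mul (t ^ (β - 1))
  simp only [zero_div, one_div, inv_inv] at h2
  rw [intervalIntegrable_iff_integrableOn_Ioc_of_le ht.le,
    integrableOn_Ioc_iff_integrableOn_Ioo] at h2
  rw [integrableOn_Ioc_iff_integrableOn_Ioo]
  refine h2.congr_fun (fun s hs => ?_) measurableSet_Ioo
  simp only
  rw [aux_k_eq k β hhom ht hs, div_eq_inv_mul]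

lemma aux_eq2 (k : ℝ → ℝ → ℝ) (β : ℝ) (hβ0 : 0 < β)
    (hhom : ∀ t : ℝ, 0 < t → ∀ s ∈ Set.Ioo (0:ℝ) 1, k t (t * s) = t ^ (β - 1) * k 1 s)
    (hk : IntegrableOn (k 1) (Set.Ioc 0 1)) {t : ℝ} (ht : 0 < t) (l : ℝ) :
    PhiHatR k β (-(l * t ^ β)) =
      1 - l * ∫ s in Set.Ioc (0:ℝ) t, k t s * PhiHatR k β (-(l * s ^ β)) := by
  rw [aux_eq1 k β hβ0 hk]
  have e : ∫ s in Set.Ioc (0:ℝ) t, k t s * PhiHatR k β (-(l * s ^ β)) =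
      t ^ β * ∫ r in Set.Ioc (0:ℝ) 1, k 1 r * PhiHatR k β (-(l * t ^ β) * r ^ β) := by
    have e1 : ∫ s in Set.Ioc (0:ℝ) t, k t s * PhiHatR k β (-(l * s ^ β)) =
       ∫ s in Set.Ioc (0:ℝ) t, t ^ (β - 1) *
          (fun r => k 1 r * PhiHatR k β (-(l * t ^ β) * r ^ β)) (s / t) := by
      rw [integral_Ioc_eq_integral_Ioo, integral_Ioc_eq_integral_Ioo]
      refine setIntegral_congr_fun measurableSet_Ioo fun s hs => ?_
      simp only
      rw [aux_k_eq k β hhom ht hs, Real.div_rpow hs.1.le ht.le]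
      have : t ^ β ≠ 0 := (Real.rpow_pos_of_pos ht _).ne'
      rw [show -(l * t ^ β) * (s ^ β / t ^ β) = -(l * s ^ β) by field_simp]
      ring
    rw [e1, integral_const_mul, ← intervalIntegral.integral_of_le ht.le,
      intervalIntegral.integral_comp_div
        (fun r => k 1 r * PhiHatR k β (-(l * t ^ β) * r ^ β)) ht.ne', zero_div, div_self ht.ne',
      intervalIntegral.integral_of_le zero_le_one, smul_eq_mul, ← mul_assoc]
    congr 1
    rw [← Real.rpow_add_one ht.ne']
    simp
  rw [e]
  ring

lemma aux_laplace_CM {Ω : Type*} [MeasurableSpace Ω] (P : Measure Ω) [IsProbabilityMeasure P]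
    (A : Ω → ℝ) (hAm : Measurable A) (hA0 : ∀ ω, 0 ≤ A ω) (f : ℝ → ℝ)
    (hf : ∀ l : ℝ, 0 < l → (∫ ω, Real.exp (-(l * A ω)) ∂P) = f l) : CMon f := by
  set X : Ω → ℝ := fun ω => - A ω with hX
  have hXm : Measurable X := hAm.neg
  have hint : Set.Ioi (0:ℝ) ⊆ interior (ProbabilityTheory.integrableExpSet X P) := by
    refine interior_maximal (fun l hl => ?_) isOpen_Ioi
    change Integrable (fun ω => Real.exp (l * X ω)) P
    refine Integrable.mono' (integrable_const (1:ℝ)) (by fun_prop) ?_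
    refine Filter.Eventually.of_forall fun ω => ?_
    rw [Real.norm_eq_abs, Real.abs_exp, Real.exp_le_one_iff]
    have := mul_nonneg (le_of_lt hl) (hA0 ω)
    simp only [hX]
    linarith
  have heq : Set.EqOn f (ProbabilityTheory.mgf X P) (Set.Ioi 0) := by
    intro l hl
    rw [← hf l hl, ProbabilityTheory.mgf]
    simp [hX]
  refine ⟨?_, ?_⟩
  · refine ContDiffOn.congr ?_ heq
    exact ((ProbabilityTheory.analyticOnNhd_mgf (X := X) (μ := P)).mono hint).contDiffOn
      (uniqueDiffOn_Ioi 0)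
  · intro n l hl
    rw [iteratedDerivWithin_congr heq hl, iteratedDerivWithin_of_isOpen isOpen_Ioi hl,
      ProbabilityTheory.iteratedDeriv_mgf (hint hl), ← integral_const_mul]
    refine integral_nonneg fun ω => ?_
    simp only [Pi.zero_apply, hX]
    rw [← mul_assoc, ← mul_pow]
    have := hA0 ω
    simp only [mul_neg, neg_mul, one_mul, neg_neg]
    positivity

lemma aux_norm_exp (a : ℝ) : ‖Complex.exp (Complex.I * (a : ℂ))‖ = 1 := by
  rw [mul_comm]; exact Complex.norm_exp_ofReal_mul_I a

lemma aux_char {Ω : Type*} [MeasurableSpace Ω] (P : Measure Ω) [IsProbabilityMeasure P]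
    (A Y : Ω → ℝ) (hAm : Measurable A) (hYm : Measurable Y) (hA0 : ∀ ω, 0 ≤ A ω)
    (hI : ProbabilityTheory.IndepFun Y A P) (δ c : ℝ) (hδ : 0 < δ)
    (hY : ∀ p : ℝ, charFn1 P Y p = Complex.exp (-((c * |p| ^ δ : ℝ) : ℂ))) (p : ℝ) :
    charFn1 P (fun ω => A ω ^ (1 / δ) * Y ω) p =
      ((∫ ω, Real.exp (-((c * |p| ^ δ) * A ω)) ∂P : ℝ) : ℂ) := by
  have hmap := hI.map_prod_eq_prod_map_map hYm.aemeasurable hAm.aemeasurable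
  set F : ℝ × ℝ → ℂ := fun z => Complex.exp (Complex.I * ((p * (z.2 ^ (1 / δ) * z.1) : ℝ) : ℂ))
    with hF
  have hFm : Measurable F := by
    simp only [hF]; fun_prop
  have : IsProbabilityMeasure (P.map Y) := Measure.isProbabilityMeasure_map hYm.aemeasurable
  have : IsProbabilityMeasure (P.map A) := Measure.isProbabilityMeasure_map hAm.aemeasurable
  have h1 : charFn1 P (fun ω => A ω ^ (1 / δ) * Y ω) p = ∫ z, F z ∂(P.map (fun ω => (Y ω, A ω))) := by
    rw [integral_map (by fun_prop) hFm.aestronglyMeasurable]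
    rfl
  have hint : Integrable F ((P.map Y).prod (P.map A)) := by
    refine Integrable.mono' (integrable_const (1:ℝ)) hFm.aestronglyMeasurable ?_
    exact Filter.Eventually.of_forall fun z => (aux_norm_exp _).le
  rw [h1, hmap, integral_prod_symm _ hint, integral_map hAm.aemeasurable, ← integral_complex_ofReal]
  · refine integral_congr_ae (Filter.Eventually.of_forall fun ω => ?_)
    simp only
    rw [integral_map hYm.aemeasurable (by simp only [hF]; fun_prop)]
    have := hY (p * A ω ^ (1 / δ))
    rw [charFn1] at this
    simp only [hF]
    simp only [mul_assoc] at this ⊢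
    rw [this, abs_mul, abs_of_nonneg (Real.rpow_nonneg (hA0 ω) _),
      Real.mul_rpow (abs_nonneg _) (Real.rpow_nonneg (hA0 ω) _), ← Real.rpow_mul (hA0 ω),
      one_div_mul_cancel hδ.ne', Real.rpow_one]
    push_cast
    rfl
  · exact (hFm.stronglyMeasurable.integral_prod_left').aestronglyMeasurable

lemma aux_FT_u {Ω : Type*} [MeasurableSpace Ω] (P : Measure Ω) [IsProbabilityMeasure P]
    (X : Ω → ℝ) (hX : Measurable X) (u : SchwartzMap ℝ ℂ) (p : ℝ) :
    FT1 (fun y => ∫ ω, u (y + X ω) ∂P) p = charFn1 P X p * FT1 u p := by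
  set F : ℝ → Ω → ℂ := fun x ω => Complex.exp (-Complex.I * ((p * x : ℝ) : ℂ)) * u (x + X ω) with hF
  have hFm : AEStronglyMeasurable (Function.uncurry F) (volume.prod P) := by
    simp only [hF]
    have h1 : Measurable (fun z : ℝ × Ω => u (z.1 + X z.2)) :=
      u.continuous.measurable.comp (by fun_prop)
    have h2 : Measurable (fun z : ℝ × Ω => Complex.exp (-Complex.I * ((p * z.1 : ℝ) : ℂ))) := by
      fun_prop
    exact (h2.mul h1).aestronglyMeasurable
  have hn : ∀ x ω, ‖F x ω‖ = ‖u (x + X ω)‖ := by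
    intro x ω
    simp only [hF]
    rw [norm_mul, show -Complex.I * ((p * x : ℝ) : ℂ) = Complex.I * ((-(p * x) : ℝ) : ℂ) by
      push_cast; ring, aux_norm_exp, one_mul]
  have hint : Integrable (Function.uncurry F) (volume.prod P) := by
    rw [integrable_prod_iff' hFm]
    constructor
    · refine Filter.Eventually.of_forall fun ω => ?_
      have h1 : Integrable (fun x => u (x + X ω)) := u.integrable.comp_add_right (X ω)
      refine h1.mono ?_ (Filter.Eventually.of_forall fun x => (hn x ω).le)
      have : Continuous (fun x => F x ω) := by
        simp only [hF]
        have := u.continuous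
        fun_prop
      exact this.aestronglyMeasurable
    · simp only [Function.uncurry, hn]
      simp only [integral_add_right_eq_self (fun x => ‖u x‖)]
      exact integrable_const _
  unfold FT1 charFn1
  rw [mul_left_comm, ← integral_mul_const]
  congr 1
  simp only [← integral_const_mul]
  rw [integral_integral_swap hint]
  refine integral_congr_ae (Filter.Eventually.of_forall fun ω => ?_)
  simp only
  have := integral_add_right_eq_self (μ := volume)
    (fun x => Complex.exp (-Complex.I * ((p * (x - X ω) : ℝ) : ℂ)) * u x) (X ω)
  simp only [add_sub_cancel_right] at this
  simp only [hF]
  rw [this]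
  refine integral_congr_ae (Filter.Eventually.of_forall fun x => ?_)
  simp only
  rw [← mul_assoc, ← Complex.exp_add]
  congr 2
  push_cast
  ring

lemma aux_FTinv_u {Ω : Type*} [MeasurableSpace Ω] (P : Measure Ω) [IsProbabilityMeasure P]
    (X : Ω → ℝ) (hX : Measurable X) (h : ℝ → ℂ) (hh : Integrable h) (x : ℝ) :
    ∫ ω, FTinv1 h (x + X ω) ∂P = FTinv1 (fun p => charFn1 P X p * h p) x := by
  unfold FTinv1 charFn1
  rw [integral_const_mul]
  congr 1
  have hint : Integrable (Function.uncurry fun ω p =>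
      Complex.exp (Complex.I * ((p * (x + X ω) : ℝ) : ℂ)) * h p) (P.prod volume) := by
    have h1 : Integrable (fun z : Ω × ℝ => h z.2) (P.prod volume) := hh.comp_snd P
    refine h1.mono ?_ (Filter.Eventually.of_forall fun z => ?_)
    · refine AEStronglyMeasurable.mul ?_ h1.aestronglyMeasurable
      exact (by fun_prop : Measurable fun z : Ω × ℝ =>
        Complex.exp (Complex.I * ((z.2 * (x + X z.1) : ℝ) : ℂ))).aestronglyMeasurable
    · simp only [Function.uncurry]
      rw [norm_mul, aux_norm_exp, one_mul]
  rw [integral_integral_swap hint]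
  refine integral_congr_ae (Filter.Eventually.of_forall fun p => ?_)
  simp only
  rw [integral_mul_const, ← mul_assoc, ← integral_const_mul]
  congr 1
  refine integral_congr_ae (Filter.Eventually.of_forall fun ω => ?_)
  simp only
  rw [← Complex.exp_add]
  congr 1
  push_cast
  ring

open FourierTransform in
lemma aux_FT1_eq (u : SchwartzMap ℝ ℂ) (p : ℝ) :
    FT1 u p = (((2 * Real.pi) ^ (-(1 : ℝ) / 2) : ℝ) : ℂ) * (𝓕 u) (p / (2 * Real.pi)) := by
  unfold FT1
  rw [SchwartzMap.fourier_coe, Real.fourier_real_eq_integral_exp_smul]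
  congr 1
  refine integral_congr_ae (Filter.Eventually.of_forall fun x => ?_)
  simp only [smul_eq_mul]
  congr 2
  have : (Real.pi : ℂ) ≠ 0 := by exact_mod_cast Real.pi_ne_zero
  push_cast
  field_simp

lemma aux_FT1_cont (u : SchwartzMap ℝ ℂ) : Continuous (FT1 u) := by
  have : FT1 u = fun p => (((2 * Real.pi) ^ (-(1 : ℝ) / 2) : ℝ) : ℂ) *
      (FourierTransform.fourier u) (p / (2 * Real.pi)) := funext (aux_FT1_eq u)
  rw [this]
  have := (FourierTransform.fourier u).continuous
  fun_prop

open FourierTransform in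
lemma aux_FT1_int (u : SchwartzMap ℝ ℂ) : Integrable (FT1 u) := by
  have : FT1 u = fun p => (((2 * Real.pi) ^ (-(1 : ℝ) / 2) : ℝ) : ℂ) *
      (𝓕 u) (p / (2 * Real.pi)) := funext (aux_FT1_eq u)
  rw [this]
  exact ((𝓕 u).integrable.comp_div (by positivity : (2 * Real.pi) ≠ 0)).const_mul _

open FourierTransform in
lemma aux_FT1_int2 (u : SchwartzMap ℝ ℂ) : Integrable (fun p => ‖p‖ ^ 2 * ‖FT1 u p‖) := by
  have h1 := (𝓕 u).integrable_pow_mul volume 2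
  have h2 := ((h1.comp_div (by positivity : (2 * Real.pi) ≠ 0)).const_mul
    ((2 * Real.pi) ^ 2 * ‖(((2 * Real.pi) ^ (-(1 : ℝ) / 2) : ℝ) : ℂ)‖))
  refine h2.congr (Filter.Eventually.of_forall fun p => ?_)
  simp only
  rw [aux_FT1_eq, norm_mul, norm_div, Real.norm_of_nonneg (by positivity : 0 ≤ 2 * Real.pi)]
  field_simp

lemma aux_FT1_intg (u : SchwartzMap ℝ ℂ) {γ : ℝ} (h0 : 0 < γ) (h2 : γ ≤ 2) :
    Integrable (fun p => ((|p| ^ γ : ℝ) : ℂ) * FT1 u p) := by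
  have h1 := (aux_FT1_int u).norm.add (aux_FT1_int2 u)
  refine Integrable.mono' h1 ?_ (Filter.Eventually.of_forall fun p => ?_)
  · refine AEStronglyMeasurable.mul ?_ (aux_FT1_cont u).aestronglyMeasurable
    exact (by fun_prop : Measurable fun p : ℝ => ((|p| ^ γ : ℝ) : ℂ)).aestronglyMeasurable
  · rw [norm_mul, Complex.norm_real, Real.norm_of_nonneg (by positivity)]
    simp only [Pi.add_apply, Real.norm_eq_abs]
    have : |p| ^ γ ≤ 1 + |p| ^ 2 := by
      rcases le_total |p| 1 with h | h
      · have := Real.rpow_le_one (abs_nonneg p) h h0.le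
        nlinarith [abs_nonneg p]
      · have := Real.rpow_le_rpow_of_exponent_le h h2
        rw [Real.rpow_two] at this
        linarith
    nlinarith [norm_nonneg (FT1 u p)]

open FourierTransform in
lemma aux_inv (u : SchwartzMap ℝ ℂ) (x : ℝ) : FTinv1 (FT1 u) x = u x := by
  have h := congrArg (fun f : SchwartzMap ℝ ℂ => f x) 
    (FourierTransform.fourierInv_fourier_eq u : (𝓕⁻ (𝓕 u : SchwartzMap ℝ ℂ) : SchwartzMap ℝ ℂ) = u)
  rw [SchwartzMap.fourierInv_coe, Real.fourierInv_eq'] at h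
  rw [← h, FTinv1]
  have h2 := Measure.integral_comp_div (fun v : ℝ =>
    Complex.exp ((2 * Real.pi * inner ℝ v x : ℝ) * Complex.I) • (𝓕 u) v) (2 * Real.pi)
  have h3 : ∀ p, Complex.exp (Complex.I * ((p * x : ℝ) : ℂ)) * FT1 u p =
     (((2 * Real.pi) ^ (-(1 : ℝ) / 2) : ℝ) : ℂ) * (Complex.exp ((2 * Real.pi * inner ℝ (p / (2 * Real.pi)) x : ℝ) * Complex.I) • (𝓕 u) (p / (2 * Real.pi))) := by
    intro p
    rw [aux_FT1_eq, smul_eq_mul, mul_left_comm]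
    congr 3
    rw [mul_comm Complex.I]
    congr 2
    simp only [RCLike.inner_apply, conj_trivial]
    field_simp
  simp only [h3]
  rw [integral_const_mul, h2, abs_of_nonneg (by positivity), Complex.real_smul, ← mul_assoc, ← mul_assoc, ← Complex.ofReal_mul,
    ← Complex.ofReal_mul, ← Real.rpow_add (by positivity)]
  rw [show -(1:ℝ) / 2 + -1 / 2 = -1 by norm_num, Real.rpow_neg_one,
    inv_mul_cancel₀ (by positivity), Complex.ofReal_one, one_mul]

theorem stmt18 (k : ℝ → ℝ → ℝ) (β : ℝ) (hβ0 : 0 < β) (hβ2 : β < 2)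
    (hkm : Measurable (Function.uncurry k))
    (hhom : ∀ t : ℝ, 0 < t → ∀ s ∈ Set.Ioo (0:ℝ) 1, k t (t * s) = t ^ (β - 1) * k 1 s)
    (ε : ℝ) (hε : 0 < ε)
    (hkL : MeasureTheory.IntegrableOn (fun s => |k 1 s| ^ (1 + ε)) (Set.Ioo 0 1))
    (hCM : CMon (fun x => PhiHatR k β (-x)))
    (γ δ : ℝ) (hγ1 : β < γ) (hγ2 : γ ≤ 2) (hδ1 : γ ≤ δ) (hδ2 : δ ≤ 2)
    {Ω : Type*} [MeasurableSpace Ω] (P : Measure Ω) [IsProbabilityMeasure P]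
    (A : Ω → ℝ) (hAm : Measurable A) (hA0 : ∀ ω, 0 ≤ A ω)
    (hALap : ∀ l : ℝ, 0 < l →
      (∫ ω, Real.exp (-(l * A ω)) ∂P) = PhiHatR k β (-(l ^ (γ / δ))))
    (Y : ℝ → Ω → ℝ) (hYm : Measurable (Function.uncurry Y))
    (hYchar : ∀ t : ℝ, 0 ≤ t → ∀ p : ℝ,
      charFn1 P (Y t) p = Complex.exp (-(((t ^ (δ * β / γ) * |p| ^ δ : ℝ)) : ℂ)))
    (hInd : ProbabilityTheory.Indep
      (⨆ t : ℝ, MeasurableSpace.comap (Y t) inferInstance)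
      (MeasurableSpace.comap A inferInstance) P) :
    CMon (fun x => PhiHatR k β (-(x ^ (γ / δ)))) ∧
    (∀ p : ℝ, ∀ t : ℝ, 0 ≤ t →
      charFn1 P (fun ω => A ω ^ (1 / δ) * Y t ω) p =
        ((PhiHatR k β (-(|p| ^ γ * t ^ β)) : ℝ) : ℂ)) ∧
    ProvidesSol1 P (fun t ω => A ω ^ (1 / δ) * Y t ω) k
      (fun p => ((|p| ^ γ : ℝ) : ℂ)) := by
  have hγ0 : 0 < γ := by linarith
  have hδ0 : 0 < δ := by linarith
  have hk := aux_kint k hkm ε hε hkL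
  obtain ⟨H, hHc, hH1, hHphi⟩ :
      ∃ H : ℝ → ℝ, Continuous H ∧ (∀ y, |H y| ≤ 1) ∧
        (∀ y, 0 ≤ y → PhiHatR k β (-y) = H y) := by
    have hle : ∀ y ω, ‖Real.exp (-(|y| ^ (δ / γ) * A ω))‖ ≤ 1 := by
      intro y ω
      have := hA0 ω
      rw [Real.norm_eq_abs, Real.abs_exp, Real.exp_le_one_iff, neg_nonpos]
      positivity
    refine ⟨fun y => ∫ ω, Real.exp (-(|y| ^ (δ / γ) * A ω)) ∂P, ?_, ?_, ?_⟩
    · refine continuous_of_dominated (bound := fun _ => 1) (fun y => by fun_prop)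
        (fun y => Filter.Eventually.of_forall (hle y)) (integrable_const _)
        (Filter.Eventually.of_forall fun ω => ?_)
      have h1 : Continuous fun y : ℝ => |y| ^ (δ / γ) :=
        continuous_abs.rpow_const fun _ => Or.inr (by positivity)
      fun_prop
    · intro y
      have := norm_integral_le_of_norm_le_const (μ := P) (C := 1)
        (Filter.Eventually.of_forall (hle y))
      simpa using this
    · intro y hy
      rcases hy.eq_or_lt with rfl | hy'
      · have : (0:ℝ) ^ (δ / γ) = 0 := Real.zero_rpow (by positivity)
        simp [aux_phi_zero, this]
      · simp only
        rw [abs_of_pos hy', hALap _ (by positivity), ← Real.rpow_mul hy,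
          show δ / γ * (γ / δ) = 1 by field_simp, Real.rpow_one]
  have hYt : ∀ t, Measurable (Y t) := fun t => hYm.of_uncurry_left
  have hXm : ∀ t, Measurable (fun ω => A ω ^ (1 / δ) * Y t ω) := by
    intro t
    have := hYt t
    fun_prop
  have hchar : ∀ p : ℝ, ∀ t : ℝ, 0 ≤ t →
      charFn1 P (fun ω => A ω ^ (1 / δ) * Y t ω) p =
        ((PhiHatR k β (-(|p| ^ γ * t ^ β)) : ℝ) : ℂ) := by
    intro p t ht
    have hIF : ProbabilityTheory.IndepFun (Y t) A P := by
      rw [ProbabilityTheory.IndepFun_iff_Indep]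
      exact ProbabilityTheory.indep_of_indep_of_le_left hInd
        (le_iSup (fun t : ℝ => MeasurableSpace.comap (Y t) inferInstance) t)
    rw [aux_char P A (Y t) hAm (hYt t) hA0 hIF δ _ hδ0 (hYchar t ht) p]
    congr 1
    have hl : 0 ≤ t ^ (δ * β / γ) * |p| ^ δ := by positivity
    have hp : (t ^ (δ * β / γ) * |p| ^ δ) ^ (γ / δ) = |p| ^ γ * t ^ β := by
      rw [Real.mul_rpow (by positivity) (by positivity), ← Real.rpow_mul ht,
        ← Real.rpow_mul (abs_nonneg p), show δ * β / γ * (γ / δ) = β by field_simp,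
        show δ * (γ / δ) = γ by field_simp, mul_comm]
    rw [← hp]
    rcases hl.eq_or_lt with h0 | h0
    · rw [← h0, Real.zero_rpow (by positivity)]
      simp [aux_phi_zero]
    · exact hALap _ h0
  refine ⟨aux_laplace_CM P A hAm hA0 _ hALap, hchar, ?_⟩
  intro u
  have hcH : ∀ p : ℝ, ∀ t : ℝ, 0 ≤ t →
      charFn1 P (fun ω => A ω ^ (1 / δ) * Y t ω) p = ((H (|p| ^ γ * t ^ β) : ℝ) : ℂ) := by
    intro p t ht
    rw [hchar p t ht, hHphi _ (by positivity)]
  have hFT : ∀ s : ℝ, 0 ≤ s → ∀ p, FT1 (fun y => ∫ ω, u (y + A ω ^ (1 / δ) * Y s ω) ∂P) p =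
      ((H (|p| ^ γ * s ^ β) : ℝ) : ℂ) * FT1 u p := by
    intro s hs p
    rw [aux_FT_u P _ (hXm s) u p, hcH p s hs]
  have hsol : ∀ t : ℝ, 0 ≤ t → ∀ x, ∫ ω, u (x + A ω ^ (1 / δ) * Y t ω) ∂P =
      FTinv1 (fun p => ((H (|p| ^ γ * t ^ β) : ℝ) : ℂ) * FT1 u p) x := by
    intro t ht x
    have := aux_FTinv_u P _ (hXm t) (FT1 u) (aux_FT1_int u) x
    simp only [aux_inv, hcH _ t ht] at this
    exact this
  have hnH : ∀ y, ‖((H y : ℝ) : ℂ)‖ ≤ 1 := by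
    intro y
    rw [Complex.norm_real]
    exact hH1 y
  have hpc : Continuous fun p : ℝ => |p| ^ γ :=
    continuous_abs.rpow_const fun _ => Or.inr hγ0.le
  have hHp : ∀ c : ℝ, Continuous fun p : ℝ => ((H (|p| ^ γ * c) : ℝ) : ℂ) := by
    intro c
    fun_prop
  have hgi := aux_FT1_intg u hγ0 hγ2
  have hi := aux_FT1_int u
  have hexpc : ∀ x : ℝ, Continuous fun p : ℝ => Complex.exp (Complex.I * ((p * x : ℝ) : ℂ)) := by
    intro x
    fun_prop
  refine ⟨?_, ?_, ?_⟩
  · intro s hs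
    simp only [hFT s hs]
    refine hgi.mono ?_ (Filter.Eventually.of_forall fun p => ?_)
    · have := aux_FT1_cont u
      have := hHp (s ^ β)
      exact (by fun_prop : Continuous fun p : ℝ => ((|p| ^ γ : ℝ) : ℂ) *
        (((H (|p| ^ γ * s ^ β) : ℝ) : ℂ) * FT1 u p)).aestronglyMeasurable
    · rw [norm_mul, norm_mul, norm_mul]
      exact mul_le_mul_of_nonneg_left
        (mul_le_of_le_one_left (norm_nonneg _) (hnH _)) (norm_nonneg _)
  · intro t ht x
    rw [hsol t ht.le x]
    have e1 : ∫ s in Set.Ioc (0:ℝ) t, (k t s : ℂ) * Lop1 (fun p => ((|p| ^ γ : ℝ) : ℂ))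
          (fun y => ∫ ω, u (y + A ω ^ (1 / δ) * Y s ω) ∂P) x =
        ∫ s in Set.Ioc (0:ℝ) t, (((2 * Real.pi) ^ (-(1 : ℝ) / 2) : ℝ) : ℂ) *
          ∫ p : ℝ, (k t s : ℂ) * (Complex.exp (Complex.I * ((p * x : ℝ) : ℂ)) *
            (-((|p| ^ γ : ℝ) : ℂ) * (((H (|p| ^ γ * s ^ β) : ℝ) : ℂ) * FT1 u p))) := by
      refine setIntegral_congr_fun measurableSet_Ioc fun s hs => ?_
      simp only [Lop1, FTinv1, hFT s hs.1.le]
      rw [integral_const_mul]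
      ring
    have hkt : Integrable (fun s => (k t s : ℂ)) (volume.restrict (Set.Ioc 0 t)) :=
      (aux_kint_t k β hhom hk ht).ofReal
    have hint : Integrable (Function.uncurry fun s p : ℝ =>
        (k t s : ℂ) * (Complex.exp (Complex.I * ((p * x : ℝ) : ℂ)) *
            (-((|p| ^ γ : ℝ) : ℂ) * (((H (|p| ^ γ * s ^ β) : ℝ) : ℂ) * FT1 u p))))
        ((volume.restrict (Set.Ioc 0 t)).prod volume) := by
      have h1 := hkt.mul_prod hgi
      have hm : Measurable (Function.uncurry fun s p : ℝ =>
        (k t s : ℂ) * (Complex.exp (Complex.I * ((p * x : ℝ) : ℂ)) *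
            (-((|p| ^ γ : ℝ) : ℂ) * (((H (|p| ^ γ * s ^ β) : ℝ) : ℂ) * FT1 u p)))) := by
        have m1 : Measurable (k t) := hkm.of_uncurry_left
        have m2 := (aux_FT1_cont u).measurable
        have m3 := hHc.measurable
        unfold Function.uncurry
        fun_prop
      refine h1.mono hm.aestronglyMeasurable (Filter.Eventually.of_forall fun z => ?_)
      simp only [Function.uncurry, norm_mul, norm_neg, aux_norm_exp, one_mul]
      refine mul_le_mul_of_nonneg_left (mul_le_mul_of_nonneg_left
        (mul_le_of_le_one_left (norm_nonneg _) (hnH _)) (norm_nonneg _)) (norm_nonneg _)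
    rw [e1, integral_const_mul, integral_integral_swap hint, ← aux_inv u x]
    unfold FTinv1
    rw [← mul_add]
    congr 1
    rw [← integral_add]
    · refine integral_congr_ae (Filter.Eventually.of_forall fun p => ?_)
      simp only
      have e2 : ∀ s : ℝ, (k t s : ℂ) * (Complex.exp (Complex.I * ((p * x : ℝ) : ℂ)) *
            (-((|p| ^ γ : ℝ) : ℂ) * (((H (|p| ^ γ * s ^ β) : ℝ) : ℂ) * FT1 u p))) =
          ((k t s * H (|p| ^ γ * s ^ β) : ℝ) : ℂ) * (Complex.exp (Complex.I * ((p * x : ℝ) : ℂ)) *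
            (-((|p| ^ γ : ℝ) : ℂ) * FT1 u p)) := by
        intro s
        push_cast
        ring
      simp only [e2]
      have e3 := aux_eq2 k β hβ0 hhom hk ht (|p| ^ γ)
      have e4 : ∫ s in Set.Ioc (0:ℝ) t, k t s * PhiHatR k β (-(|p| ^ γ * s ^ β)) =
          ∫ s in Set.Ioc (0:ℝ) t, k t s * H (|p| ^ γ * s ^ β) := by
        refine setIntegral_congr_fun measurableSet_Ioc fun s hs => ?_
        have := hs.1.le
        rw [hHphi _ (by positivity)]
      rw [hHphi _ (by positivity), e4] at e3
      rw [integral_mul_const, integral_complex_ofReal, e3]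
      push_cast
      ring
    · refine hi.mono ((hexpc x).mul (aux_FT1_cont u)).aestronglyMeasurable
        (Filter.Eventually.of_forall fun p => ?_)
      rw [norm_mul, aux_norm_exp, one_mul]
    · exact hint.integral_prod_right
  · intro x
    have h1 : Tendsto (fun t : ℝ => FTinv1 (fun p => ((H (|p| ^ γ * t ^ β) : ℝ) : ℂ) * FT1 u p) x)
        (nhdsWithin 0 (Set.Ioi 0)) (nhds (u x)) := by
      rw [← aux_inv u x]
      unfold FTinv1
      refine Tendsto.const_mul _ ?_
      refine tendsto_integral_filter_of_dominated_convergence (fun p => ‖FT1 u p‖)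
        (Filter.Eventually.of_forall fun t =>
          ((hexpc x).mul ((hHp (t ^ β)).mul (aux_FT1_cont u))).aestronglyMeasurable)
        (Filter.Eventually.of_forall fun t => Filter.Eventually.of_forall fun p => ?_) hi.norm
        (Filter.Eventually.of_forall fun p => ?_)
      · rw [norm_mul, aux_norm_exp, one_mul, norm_mul]
        exact mul_le_of_le_one_left (norm_nonneg _) (hnH _)
      · refine Tendsto.const_mul _ ?_
        have c1 : Continuous fun t : ℝ => t ^ β :=
          continuous_id.rpow_const fun _ => Or.inr hβ0.le
        have c2 : Continuous fun t : ℝ => ((H (|p| ^ γ * t ^ β) : ℝ) : ℂ) * FT1 u p := by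
          fun_prop
        have c3 := c2.tendsto 0
        rw [Real.zero_rpow hβ0.ne', mul_zero, ← hHphi 0 le_rfl, neg_zero, aux_phi_zero,
          Complex.ofReal_one, one_mul] at c3
        exact c3.mono_left nhdsWithin_le_nhds
    refine h1.congr' ?_
    filter_upwards [self_mem_nhdsWithin] with t ht
    exact (hsol t (le_of_lt ht) x).symm
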